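/- arXiv:1510.07926 — 2 statements merged into one kernel-verified Lean document; each statement's English description precedes it below -/
import Mathlib

section
/- For every integer n > 1, the menage number M_n (the number of seating arrangements of n couples around a circular table with labeled seats such that men and women alternate and no couple sits adjacently) satisfies M_n = 2 * n! * sum over j from 0 to n of (-1)^j * (n-j)! * (2n/(2n-j)) * binomial(2n-j, j) (the Touchard formula). -/
/-- The menage number `M n`: the number of ways to seat `n` couples (each couple consisting
of a woman, `(i, false)`, and a man, `(i, true)`) on `2n` labeled seats around a circular
table so that genders alternate and no couple occupies adjacent seats. A seating is a
bijection from seats `ZMod (2n)` to people `Fin n × Bool`; seats `i` and `i+1` are adjacent. -/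
noncomputable def menageNumber (n : ℕ) : ℕ :=
  Nat.card {s : ZMod (2 * n) ≃ (Fin n × Bool) //
    ∀ i : ZMod (2 * n), (s i).2 ≠ (s (i + 1)).2 ∧ (s i).1 ≠ (s (i + 1)).1}

/-- No two consecutive elements. -/
def NC (S : Finset ℕ) : Prop := ∀ x ∈ S, x + 1 ∉ S
instance : DecidablePred NC := fun S => by unfold NC; infer_instance

lemma nc_insert {a m : ℕ} {S : Finset ℕ} (hS : S ⊆ Finset.Ico a (a+m)) :
    NC (insert (a+m) S) ↔ NC S ∧ ∀ x ∈ S, x + 1 ≠ a + m := by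
  have h : ∀ x ∈ S, x < a + m := fun x hx => (Finset.mem_Ico.1 (hS hx)).2
  unfold NC
  constructor
  · intro H
    refine ⟨fun x hx hx' => H x (by simp [hx]) (by simp [hx']), fun x hx e => H x (by simp [hx]) (by simp [e])⟩
  · rintro ⟨H1, H2⟩ x hx hx'
    simp only [Finset.mem_insert] at hx hx'
    rcases hx with rfl | hx
    · rcases hx' with h' | h'
      · omega
      · have := h _ h'; omega
    · rcases hx' with h' | h'
      · exact H2 x hx h'
      · exact H1 x hx h'

def linCount (a m k : ℕ) : ℕ := ∑ S ∈ (Finset.Ico a (a+m)).powerset, if NC S ∧ S.card = k then 1 else 0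

lemma ico_succ (a m : ℕ) : Finset.Ico a (a+(m+1)) = insert (a+m) (Finset.Ico a (a+m)) := by
  ext x; simp only [Finset.mem_Ico, Finset.mem_insert]; omega

lemma linCount_rec (a m k : ℕ) : linCount a (m+2) (k+1) = linCount a (m+1) (k+1) + linCount a m k := by
  unfold linCount
  rw [ico_succ a (m+1), Finset.sum_powerset_insert (by simp)]
  congr 1
  rw [ico_succ a m, Finset.sum_powerset_insert (by simp)]
  have : ∀ S ∈ (Finset.Ico a (a+m)).powerset, (if NC (insert (a+(m+1)) (insert (a+m) S)) ∧ (insert (a+(m+1)) (insert (a+m) S)).card = k+1 then 1 else 0) = 0 := by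
    intro S hS
    rw [if_neg]
    rintro ⟨h, -⟩
    exact h (a+m) (by simp) (by simp [add_assoc])
  rw [Finset.sum_congr rfl this, Finset.sum_const_zero, add_zero]
  refine Finset.sum_congr rfl fun S hS => ?_
  rw [Finset.mem_powerset] at hS
  have h : ∀ x ∈ S, x < a + m := fun x hx => (Finset.mem_Ico.1 (hS hx)).2
  have hS' : S ⊆ Finset.Ico a (a+(m+1)) := hS.trans (by rw [ico_succ]; exact Finset.subset_insert _ _)
  have hn : a+(m+1) ∉ S := fun h' => by have := h _ h'; omega
  simp only [nc_insert hS', Finset.card_insert_of_notMem hn]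
  have : ∀ x ∈ S, x + 1 ≠ a + (m+1) := fun x hx => by have := h _ hx; omega
  simp only [eq_true this, and_true, Nat.add_right_cancel_iff]

lemma linCount_zero_right (a m : ℕ) : linCount a m 0 = 1 := by
  unfold linCount
  rw [Finset.sum_eq_single ∅]
  · simp [NC]
  · intro b _ hb; simp [hb]
  · simp

lemma linCount_eq (a m : ℕ) : ∀ k, linCount a m k = Nat.choose (m+1-k) k := by
  induction m using Nat.twoStepInduction with
  | zero =>
    rintro (_ | k)
    · simp [linCount_zero_right]
    · have : 0 + 1 - (k+1) = 0 := by omega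
      rw [this]; simp [linCount]
  | one =>
    rintro (_ | _ | k)
    · simp [linCount_zero_right]
    · rw [linCount, ico_succ, Finset.sum_powerset_insert (by simp), add_zero, Finset.Ico_self, Finset.powerset_empty, Finset.sum_singleton, Finset.sum_singleton]; simp [NC]
    · have : 1 + 1 - (k+1+1) = 0 := by omega
      rw [this, linCount, ico_succ, Finset.sum_powerset_insert (by simp), add_zero, Finset.Ico_self, Finset.powerset_empty, Finset.sum_singleton, Finset.sum_singleton]; simp [NC]
  | more m h0 h1 =>
    rintro (_ | k)
    · simp [linCount_zero_right]
    · rw [linCount_rec, h0, h1]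
      by_cases hk : k ≤ m + 1
      · obtain ⟨d, hd⟩ : ∃ d, m + 1 = k + d := ⟨m+1-k, by omega⟩
        have e1 : m + 2 + 1 - (k+1) = d + 1 := by omega
        have e2 : m + 1 + 1 - (k+1) = d := by omega
        have e3 : m + 1 - k = d := by omega
        rw [e1, e2, e3, Nat.choose_succ_succ, add_comm]
      · have e1 : m + 2 + 1 - (k+1) = 0 := by omega
        have e2 : m + 1 + 1 - (k+1) = 0 := by omega
        have e3 : m + 1 - k = 0 := by omega
        rw [e1, e2, e3]
        obtain ⟨k, rfl⟩ : ∃ k', k = k' + 1 := ⟨k-1, by omega⟩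
        simp

/-- cyclic version -/
def CNC (N : ℕ) (S : Finset ℕ) : Prop := NC S ∧ ¬ (0 ∈ S ∧ N - 1 ∈ S)
instance (N : ℕ) : DecidablePred (CNC N) := fun S => by unfold CNC; infer_instance

def cycCount (N k : ℕ) : ℕ := ∑ S ∈ (Finset.range N).powerset, if CNC N S ∧ S.card = k then 1 else 0

lemma cycCount_zero (N : ℕ) : cycCount N 0 = 1 := by
  unfold cycCount
  rw [Finset.sum_eq_single ∅]
  · simp [NC, CNC]
  · intro b _ hb; simp [hb]
  · simp

lemma cycCount_succ (N k : ℕ) : cycCount (N+3) (k+1) = linCount 0 (N+2) (k+1) + linCount 1 N k := by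
  unfold cycCount linCount
  rw [show Finset.range (N+3) = Finset.Ico 0 (0 + (N+2+1)) by simp, ico_succ, Finset.sum_powerset_insert (by simp)]
  congr 1
  · refine Finset.sum_congr rfl fun S hS => ?_
    rw [Finset.mem_powerset] at hS
    have h : ∀ x ∈ S, x < N+2 := fun x hx => by simpa using (Finset.mem_Ico.1 (hS hx)).2
    have hn : N + 2 ∉ S := fun h' => by have := h _ h'; omega
    simp [CNC, hn]
  · have e : Finset.Ico 0 (0 + (N+2)) = insert 0 (insert (N+1) (Finset.Ico 1 (1+N))) := by
      ext x; simp only [Finset.mem_Ico, Finset.mem_insert]; omega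
    rw [e, Finset.sum_powerset_insert (by simp), Finset.sum_powerset_insert (by simp [add_comm])]
    have z1 : ∀ S ∈ (insert (N+1) (Finset.Ico 1 (1+N))).powerset, (if CNC (N+3) (insert (0+(N+2)) (insert 0 S)) ∧ (insert (0+(N+2)) (insert 0 S)).card = k+1 then 1 else 0) = 0 := by
      intro S hS
      rw [if_neg]
      rintro ⟨h, -⟩
      exact h.2 (by simp)
    have z2 : ∀ S ∈ (Finset.Ico 1 (1+N)).powerset, (if CNC (N+3) (insert (0+(N+2)) (insert (N+1) S)) ∧ (insert (0+(N+2)) (insert (N+1) S)).card = k+1 then 1 else 0) = 0 := by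
      intro S hS
      rw [if_neg]
      rintro ⟨h, -⟩
      exact h.1 (N+1) (by simp) (by simp)
    rw [Finset.sum_congr rfl z1, Finset.sum_congr rfl z2, Finset.sum_const_zero, Finset.sum_const_zero, add_zero, add_zero]
    refine Finset.sum_congr rfl fun S hS => ?_
    rw [Finset.mem_powerset] at hS
    have h : ∀ x ∈ S, 1 ≤ x ∧ x < 1 + N := fun x hx => (Finset.mem_Ico.1 (hS hx))
    have hS' : S ⊆ Finset.Ico 0 (0+(N+2)) := hS.trans (by rw [e]; intro x; simp; tauto)
    have hn : 0+(N+2) ∉ S := fun h' => by have := h _ h'; omega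
    have h0 : 0 ∉ S := fun h' => by have := h _ h'; omega
    simp only [CNC, nc_insert hS', Finset.card_insert_of_notMem hn]
    have : ∀ x ∈ S, x + 1 ≠ 0 + (N+2) := fun x hx => by have := h _ hx; omega
    have h0' : 0 ∉ insert (0 + (N+2)) S := by simp [h0]
    simp only [eq_true this, h0', false_and, not_false_eq_true, and_true, Nat.add_right_cancel_iff]

lemma cycCount_eq (n j : ℕ) (hn : 1 < n) (hj : j ≤ n) :
    (cycCount (2*n) j : ℚ) = ((2 * n : ℚ) / (2 * n - j)) * (Nat.choose (2 * n - j) j : ℚ) := by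
  have hn' : (1:ℚ) < n := by exact_mod_cast hn
  rcases j with _ | k
  · simp [cycCount_zero]; rw [div_self (by positivity)]
  · obtain ⟨N, hN⟩ : ∃ N, 2 * n = N + 3 := ⟨2*n-3, by omega⟩
    rw [hN, cycCount_succ, linCount_eq, linCount_eq]
    obtain ⟨d, hd⟩ : ∃ d, N + 1 = k + d := ⟨N+1-k, by omega⟩
    have e1 : N + 2 + 1 - (k+1) = d + 1 := by omega
    have e2 : N + 3 - (k+1) = d + 1 := by omega
    have e3 : N + 1 - k = d := by omega
    simp only [e1, e2, e3]
    have h2 : (2*n : ℚ) = k + d + 2 := by exact_mod_cast (by omega : 2*n = k+d+2)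
    have := Nat.add_one_mul_choose_eq d k
    have h3 : ((d:ℚ)+1) * d.choose k = (d+1).choose (k+1) * (k+1) := by exact_mod_cast this
    rw [h2]
    have h4 : (k + d + 2 : ℚ) - ((k+1 : ℕ):ℚ) = d + 1 := by push_cast; ring
    rw [h4]
    have : (d:ℚ) + 1 ≠ 0 := by positivity
    push_cast
    field_simp
    linear_combination h3

lemma seat_equiv (n : ℕ) (hn : 1 < n) : ∃ φ : Bool × ZMod n ≃ ZMod (2*n),
    ∀ i, φ (false, i) + 1 = φ (true, i) ∧ φ (true, i) + 1 = φ (false, i + 1) := by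
  have : NeZero n := ⟨by omega⟩
  have : NeZero (2*n) := ⟨by omega⟩
  let f : Bool × ZMod n → ZMod (2*n) := fun p => ((2 * p.2.val + p.1.toNat : ℕ) : ZMod (2*n))
  have hinj : Function.Injective f := by
    rintro ⟨b, i⟩ ⟨c, j⟩ h
    simp only [f] at h
    rw [ZMod.natCast_eq_natCast_iff] at h
    have hi := ZMod.val_lt i
    have hj := ZMod.val_lt j
    have hb : b.toNat < 2 := Bool.toNat_lt b
    have hc : c.toNat < 2 := Bool.toNat_lt c
    have := Nat.ModEq.eq_of_lt_of_lt h (by omega) (by omega)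
    have e1 : i.val = j.val := by omega
    have e2 : b.toNat = c.toNat := by omega
    have e3 := ZMod.val_injective n e1
    subst e3
    cases b <;> cases c <;> simp_all
  have hbij : Function.Bijective f := by
    rw [Fintype.bijective_iff_injective_and_card]
    exact ⟨hinj, by simp [ZMod.card]⟩
  refine ⟨Equiv.ofBijective f hbij, fun i => ⟨?_, ?_⟩⟩
  · simp [f]
  · simp only [Equiv.ofBijective_apply, f]
    have : ((2 * i.val + true.toNat : ℕ) : ZMod (2*n)) + 1 = ((2 * (i.val + 1) : ℕ) : ZMod (2*n)) := by
      push_cast; simp; ring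
    rw [this, ZMod.natCast_eq_natCast_iff]
    have h1 : (1 : ZMod n).val = 1 := by
      have : Fact (1 < n) := ⟨hn⟩
      exact ZMod.val_one n
    rw [ZMod.val_add, h1]
    simp only [Bool.toNat_false, add_zero]
    exact Nat.ModEq.mul_left' 2 (Nat.mod_modEq _ _).symm

abbrev Derang (n : ℕ) := {σ : Equiv.Perm (ZMod n) // ∀ i, σ i ≠ i ∧ σ i ≠ i + 1}

def mkSeat (n : ℕ) (c : Bool) (w : ZMod n ≃ Fin n) (σ : Equiv.Perm (ZMod n)) :
    Bool × ZMod n ≃ Fin n × Bool :=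
  (Equiv.prodShear (if c then Equiv.boolNot else Equiv.refl Bool)
    (fun b => if b then σ.trans w else w)).trans (Equiv.prodComm _ _)

lemma mkSeat_false (n : ℕ) (c : Bool) (w : ZMod n ≃ Fin n) (σ : Equiv.Perm (ZMod n)) (i : ZMod n) :
    mkSeat n c w σ (false, i) = (w i, c) := by
  cases c <;> simp [mkSeat, Equiv.prodShear]

lemma mkSeat_true (n : ℕ) (c : Bool) (w : ZMod n ≃ Fin n) (σ : Equiv.Perm (ZMod n)) (i : ZMod n) :
    mkSeat n c w σ (true, i) = (w (σ i), !c) := by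
  cases c <;> simp [mkSeat, Equiv.prodShear]

lemma zmod_const (n : ℕ) [NeZero n] (f : ZMod n → Bool) (h : ∀ i, f (i+1) = f i) (i : ZMod n) : f i = f 0 := by
  have : ∀ k : ℕ, f (k : ZMod n) = f 0 := by
    intro k
    induction k with
    | zero => simp
    | succ k ih => rw [Nat.cast_succ, h, ih]
  simpa using this i.val

lemma menage_eq (n : ℕ) (hn : 1 < n) :
    menageNumber n = 2 * n.factorial * Nat.card (Derang n) := by
  have : NeZero n := ⟨by omega⟩
  obtain ⟨φ, hφ⟩ := seat_equiv n hn
  let P : (Bool × ZMod n ≃ Fin n × Bool) → Prop := fun t => ∀ i,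
    ((t (false,i)).2 ≠ (t (true,i)).2 ∧ (t (false,i)).1 ≠ (t (true,i)).1) ∧
    ((t (true,i)).2 ≠ (t (false,i+1)).2 ∧ (t (true,i)).1 ≠ (t (false,i+1)).1)
  have step1 : menageNumber n = Nat.card {t // P t} := by
    unfold menageNumber
    refine Nat.card_congr (Equiv.subtypeEquiv (Equiv.equivCongr φ.symm (Equiv.refl _)) ?_)
    intro s
    simp only [P, Equiv.equivCongr_apply_apply, Equiv.symm_symm, Equiv.refl_apply]
    constructor
    · intro h i
      have h1 := h (φ (false,i))
      have h2 := h (φ (true,i))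
      rw [(hφ i).1] at h1
      rw [(hφ i).2] at h2
      exact ⟨h1, h2⟩
    · intro h x
      obtain ⟨⟨b, i⟩, rfl⟩ := φ.surjective x
      cases b
      · rw [(hφ i).1]; exact (h i).1
      · rw [(hφ i).2]; exact (h i).2
  let F : Bool × (ZMod n ≃ Fin n) × Derang n → {t // P t} := fun p =>
    ⟨mkSeat n p.1 p.2.1 p.2.2.1, by
      intro i
      have := p.2.2.2 i
      simp only [mkSeat_false, mkSeat_true, ne_eq, EmbeddingLike.apply_eq_iff_eq]
      refine ⟨⟨by simp, fun h => this.1 h.symm⟩, by simp, fun h => this.2 h⟩⟩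
  have hF : Function.Bijective F := by
    constructor
    · rintro ⟨c, w, σ, hσ⟩ ⟨c', w', σ', hσ'⟩ h
      have h : mkSeat n c w σ = mkSeat n c' w' σ' := congrArg Subtype.val h
      have h0 := fun i => congrArg (fun t => t (false, i)) h
      have h1 := fun i => congrArg (fun t => t (true, i)) h
      simp only [mkSeat_false, mkSeat_true, Prod.mk.injEq] at h0 h1
      have e1 := (h0 0).2
      have e2 : w = w' := Equiv.ext fun i => (h0 i).1
      subst e1 e2
      have e3 : σ = σ' := Equiv.ext fun i => w.injective (h1 i).1
      subst e3
      rfl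
    · rintro ⟨t, ht⟩
      have g1 : ∀ i, (t (true, i)).2 = !(t (false, i)).2 := fun i => by
        have := (ht i).1.1
        revert this
        cases (t (true, i)).2 <;> cases (t (false, i)).2 <;> simp
      have g2 : ∀ i, (t (false, i+1)).2 = (t (false, i)).2 := fun i => by
        have := (ht i).2.1
        rw [g1] at this
        revert this
        cases (t (false, i+1)).2 <;> cases (t (false, i)).2 <;> simp
      have g3 := zmod_const n (fun i => (t (false, i)).2) g2
      have bij : ∀ b, Function.Bijective (fun i : ZMod n => (t (b, i)).1) := by
        intro b
        rw [Fintype.bijective_iff_injective_and_card]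
        refine ⟨fun i j h => ?_, by simp [ZMod.card]⟩
        have h2 : (t (b, i)).2 = (t (b, j)).2 := by
          cases b
          · rw [g3, g3 j]
          · rw [g1, g1, g3, g3 j]
        have := t.injective (Prod.ext h h2)
        simpa using this
      let w := Equiv.ofBijective _ (bij false)
      let m := Equiv.ofBijective _ (bij true)
      have hw : ∀ i, w i = (t (false, i)).1 := fun i => rfl
      have hm : ∀ i, m i = (t (true, i)).1 := fun i => rfl
      refine ⟨((t (false,0)).2, w, ⟨m.trans w.symm, fun i => ⟨?_, ?_⟩⟩), ?_⟩
      · simp only [Equiv.trans_apply, ne_eq, Equiv.symm_apply_eq, hw, hm]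
        exact fun h => (ht i).1.2 h.symm
      · simp only [Equiv.trans_apply, ne_eq, Equiv.symm_apply_eq, hw, hm]
        exact (ht i).2.2
      · apply Subtype.ext
        apply Equiv.ext
        rintro ⟨b, i⟩
        cases b
        · simp only [F, mkSeat_false]
          exact Prod.ext rfl (g3 i).symm
        · simp only [F, mkSeat_true]
          refine Prod.ext ?_ ?_
          · simp [hm]
          · simp only [g1, g3 i]
  rw [step1, ← Nat.card_congr (Equiv.ofBijective F hF), Nat.card_prod, Nat.card_prod]
  have : Nat.card (ZMod n ≃ Fin n) = n.factorial := by
    rw [Nat.card_eq_fintype_card, Fintype.card_equiv (ZMod.finEquiv n).symm.toEquiv, ZMod.card]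
  rw [this]
  simp [mul_assoc]

lemma count_ext {ι α : Type*} [DecidableEq ι] [Fintype α] [DecidableEq α] (S : Finset ι) (a b : ι → α)
    (ha : Set.InjOn a S) (hb : Set.InjOn b S) :
    Fintype.card {σ : Equiv.Perm α // ∀ k ∈ S, σ (a k) = b k} = (Fintype.card α - S.card).factorial := by
  classical
  obtain ⟨σ₀, h₀⟩ : ∃ σ₀ : Equiv.Perm α, ∀ k ∈ S, σ₀ (a k) = b k := by
    rcases S.eq_empty_or_nonempty with rfl | ⟨k₀, hk₀⟩
    · exact ⟨1, by simp⟩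
    have : Nonempty ι := ⟨k₀⟩
    have hl : ∀ k ∈ S, Function.invFunOn a (S : Set ι) (a k) = k := fun k hk =>
      ha.leftInvOn_invFunOn hk
    obtain ⟨g, hg⟩ := Finset.exists_equiv_extend_of_card_eq (α := α) (β := α) (t := Finset.univ) (by simp)
      (s := S.image a) (f := fun x => b (Function.invFunOn a (S : Set ι) x)) (by simp) (by
        intro x hx y hy hxy
        simp only [Finset.coe_image, Set.mem_image, Finset.mem_coe] at hx hy
        obtain ⟨k, hk, rfl⟩ := hx
        obtain ⟨l, hl', rfl⟩ := hy
        simp only [hl k hk, hl l hl'] at hxy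
        rw [hb hk hl' hxy])
    refine ⟨g.trans (Equiv.subtypeUnivEquiv (by simp)), fun k hk => ?_⟩
    have := hg (a k) (Finset.mem_image_of_mem a hk)
    simp only [hl k hk] at this
    simpa using this
  let p : α → Prop := fun x => x ∉ S.image a
  have e1 : {σ : Equiv.Perm α // ∀ k ∈ S, σ (a k) = b k} ≃ {f : Equiv.Perm α // ∀ x, ¬ p x → f x = x} := by
    refine Equiv.subtypeEquiv (Equiv.mulLeft σ₀⁻¹) fun σ => ?_
    simp only [p, not_not, Finset.mem_image, Equiv.coe_mulLeft, Equiv.Perm.mul_apply]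
    constructor
    · rintro h x ⟨k, hk, rfl⟩
      rw [h k hk, ← h₀ k hk]; simp
    · intro h k hk
      have := h (a k) ⟨k, hk, rfl⟩
      rw [Equiv.Perm.inv_eq_iff_eq] at this
      rw [this, h₀ k hk]
  rw [Fintype.card_congr (e1.trans (Equiv.Perm.subtypeEquivSubtypePerm p).symm), Fintype.card_perm]
  congr 1
  rw [Fintype.card_subtype_compl, Fintype.card_coe, Finset.card_image_of_injOn ha]

lemma bad_count (n : ℕ) [NeZero n] (hn : 1 < n) (S : Finset ℕ) (hS : S ⊆ Finset.range (2*n)) :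
    Fintype.card {σ : Equiv.Perm (ZMod n) // ∀ k ∈ S, σ ((k/2 : ℕ) : ZMod n) = (((k+1)/2 : ℕ) : ZMod n)}
      = if CNC (2*n) S then (n - S.card).factorial else 0 := by
  have hlt : ∀ k ∈ S, k < 2 * n := fun k hk => Finset.mem_range.1 (hS hk)
  have : Fact (1 < n) := ⟨hn⟩
  split_ifs with h
  · rw [count_ext S (fun k => ((k/2 : ℕ) : ZMod n)) (fun k => (((k+1)/2 : ℕ) : ZMod n)), ZMod.card]
    · intro k hk l hl hkl
      have h1 := hlt k hk
      have h2 := hlt l hl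
      simp only [ZMod.natCast_eq_natCast_iff] at hkl
      have := Nat.ModEq.eq_of_lt_of_lt hkl (by omega) (by omega)
      by_contra hne
      rcases (by omega : l = k + 1 ∨ k = l + 1) with e | e
      · exact h.1 k hk (e ▸ hl)
      · exact h.1 l hl (e ▸ hk)
    · have key : ∀ k ∈ S, ∀ l ∈ S, k < l →
          (((k+1)/2 : ℕ) : ZMod n) ≠ (((l+1)/2 : ℕ) : ZMod n) := by
        intro k hk l hl hlt' hkl
        have h1 := hlt k hk
        have h2 := hlt l hl
        rw [ZMod.natCast_eq_natCast_iff] at hkl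
        by_cases hl' : l = 2 * n - 1
        · have e : (l+1)/2 = n := by omega
          rw [e] at hkl
          have hkl' : (k+1)/2 ≡ 0 [MOD n] := hkl.trans (by simp [Nat.ModEq])
          have := Nat.ModEq.eq_of_lt_of_lt hkl' (by omega) (by omega)
          have k0 : k = 0 := by omega
          exact h.2 ⟨k0 ▸ hk, hl' ▸ hl⟩
        · have := Nat.ModEq.eq_of_lt_of_lt hkl (by omega) (by omega)
          have e : l = k + 1 := by omega
          exact h.1 k hk (e ▸ hl)
      intro k hk l hl hkl
      rcases lt_trichotomy k l with c | c | c
      · exact absurd hkl (key k hk l hl c)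
      · exact c
      · exact absurd hkl.symm (key l hl k hk c)
  · rw [Fintype.card_eq_zero_iff]
    refine ⟨fun ⟨σ, hσ⟩ => h ⟨fun k hk hk' => ?_, fun ⟨h0, h1⟩ => ?_⟩⟩
    · have a1 := hσ k hk
      have a2 := hσ (k+1) hk'
      rcases Nat.even_or_odd' k with ⟨c, rfl | rfl⟩
      · rw [show 2*c/2 = c by omega, show (2*c+1)/2 = c by omega] at a1
        rw [show (2*c+1)/2 = c by omega, show (2*c+1+1)/2 = c+1 by omega, a1] at a2
        push_cast at a2
        simp at a2
      · rw [show (2*c+1)/2 = c by omega, show (2*c+1+1)/2 = c+1 by omega] at a1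
        rw [show (2*c+1+1)/2 = c+1 by omega, show (2*c+1+1+1)/2 = c+1 by omega, ← a1] at a2
        have := σ.injective a2
        rw [a1, Nat.cast_succ] at this
        simp at this
    · have a1 := hσ _ h0
      have a2 := hσ _ h1
      rw [show (2*n-1)/2 = n - 1 by omega, show (2*n-1+1)/2 = n by omega] at a2
      simp only [Nat.zero_div, Nat.cast_zero] at a1
      rw [CharP.cast_eq_zero (ZMod n) n, ← Nat.cast_zero (R := ZMod n)] at a2
      rw [show (0+1)/2 = 0 by omega, ← a2] at a1
      have := σ.injective a1
      rw [Nat.cast_sub hn.le] at this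
      simp at this

lemma derang_count (n : ℕ) (hn : 1 < n) :
    (Nat.card (Derang n) : ℤ) = ∑ S ∈ (Finset.range (2*n)).powerset,
      (-1) ^ S.card * ((if CNC (2*n) S then (n - S.card).factorial else 0 : ℕ) : ℤ) := by
  have : NeZero n := ⟨by omega⟩
  let B : ℕ → Finset (Equiv.Perm (ZMod n)) := fun k =>
    Finset.univ.filter fun σ => σ ((k/2 : ℕ) : ZMod n) = (((k+1)/2 : ℕ) : ZMod n)
  have key := Finset.inclusion_exclusion_card_inf_compl (Finset.range (2*n)) B
  have e : Nat.card (Derang n) = ((Finset.range (2*n)).inf fun i => (B i)ᶜ).card := by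
    rw [Nat.card_eq_fintype_card]
    refine Fintype.card_of_subtype _ fun σ => ?_
    simp only [Finset.mem_inf, Finset.mem_range, Finset.mem_compl, B, Finset.mem_filter, Finset.mem_univ, true_and]
    constructor
    · intro h i
      have hi := ZMod.val_lt i
      have h1 := h (2 * i.val) (by omega)
      have h2 := h (2 * i.val + 1) (by omega)
      rw [show 2 * i.val / 2 = i.val by omega, show (2 * i.val + 1)/2 = i.val by omega] at h1
      rw [show (2 * i.val + 1)/2 = i.val by omega, show (2 * i.val + 1 + 1)/2 = i.val + 1 by omega] at h2
      push_cast at h1 h2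
      simp only [ZMod.natCast_val, ZMod.cast_id', id_eq] at h1 h2
      exact ⟨h1, h2⟩
    · intro h k hk
      rcases Nat.even_or_odd' k with ⟨c, rfl | rfl⟩
      · rw [show 2*c/2 = c by omega, show (2*c+1)/2 = c by omega]
        exact (h _).1
      · rw [show (2*c+1)/2 = c by omega, show (2*c+1+1)/2 = c+1 by omega, Nat.cast_succ]
        exact (h _).2
  rw [e, key]
  refine Finset.sum_congr rfl fun S hS => ?_
  rw [← bad_count n hn S (Finset.mem_powerset.1 hS)]
  congr 2
  symm
  refine Fintype.card_of_subtype _ fun σ => ?_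
  simp [Finset.mem_inf, B]

lemma cnc_card (n : ℕ) (hn : 1 < n) (S : Finset ℕ) (hS : S ⊆ Finset.range (2*n)) (h : CNC (2*n) S) :
    S.card ≤ n := by
  have : Set.InjOn (fun k => k / 2) (S : Set ℕ) := by
    intro k hk l hl hkl
    simp only at hkl
    by_contra hne
    rcases (by omega : l = k + 1 ∨ k = l + 1) with e | e
    · exact h.1 k hk (e ▸ hl)
    · exact h.1 l hl (e ▸ hk)
  rw [← Finset.card_image_of_injOn this]
  calc _ ≤ (Finset.range n).card := Finset.card_le_card (by
        intro x hx
        obtain ⟨k, hk, rfl⟩ := Finset.mem_image.1 hx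
        have := Finset.mem_range.1 (hS hk)
        simp only [Finset.mem_range]; omega)
    _ = n := by simp

lemma derang_count' (n : ℕ) (hn : 1 < n) :
    (Nat.card (Derang n) : ℚ) = ∑ j ∈ Finset.range (n+1),
      (-1) ^ j * ((n - j).factorial : ℚ) * (cycCount (2*n) j : ℚ) := by
  have h := congrArg (Int.cast : ℤ → ℚ) (derang_count n hn)
  rw [Int.cast_natCast] at h
  rw [h]
  unfold cycCount
  push_cast
  simp only [Finset.mul_sum]
  rw [Finset.sum_comm]
  refine Finset.sum_congr rfl fun S hS => ?_
  by_cases hc : CNC (2*n) S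
  · have := cnc_card n hn S (Finset.mem_powerset.1 hS) hc
    rw [Finset.sum_eq_single S.card]
    · simp [hc]
    · intro j _ hj
      simp [hj.symm]
    · intro hx
      simp only [Finset.mem_range] at hx
      omega
  · simp [hc]

/-- Touchard's formula: for every integer `n > 1`,
`M_n = 2 n! ∑_{j=0}^n (-1)^j (n-j)! (2n/(2n-j)) binomial(2n-j, j)`. -/
theorem touchard_formula (n : ℕ) (hn : 1 < n) :
    (menageNumber n : ℚ) =
      2 * (Nat.factorial n : ℚ) *
        ∑ j ∈ Finset.range (n + 1),
          (-1 : ℚ) ^ j * (Nat.factorial (n - j) : ℚ) *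
            ((2 * n : ℚ) / (2 * n - j)) * (Nat.choose (2 * n - j) j : ℚ) := by
  rw [menage_eq n hn]
  push_cast
  rw [derang_count' n hn]
  congr 1
  refine Finset.sum_congr rfl fun j hj => ?_
  rw [cycCount_eq n j hn (by simpa [Nat.lt_succ_iff] using hj)]
  ring
end

section
/- Let B2(t, y) be the 6×6 matrix with rows [-y, yt, t, 0, yt, -y], [-y, y(t-1), 0, y^2(t-1), yt, -y], [0, y(t-1), 0, y^2(t-1), 0, -y], [-y, 0, t-1, 0, y(t-1), 0], [-y, yt, t-1, 0, y(t-1), -y], [-y, yt, 0, y^2 t, yt, -y] over the polynomial ring ℚ[t, y]. Then det(I - x*B2) = c(xy, t) + d(xy, t)*(x + x*y^2), where c(p,t) = p^6 t^2 - 2p^5 t^3 + p^4 t^4 + 4p^5 t^2 - 4p^4 t^3 - 2p^5 t + 6p^4 t^2 - 4p^4 t + 2p^3 t - p^2 t^2 + 4p^2 - 2pt + 4p + 1 and d(p,t) = -p^2 * t * (2 + p - t)^2. -/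
open MvPolynomial

/-- The ring `ℚ[t, y, x]`, with `t = X 0`, `y = X 1`, `x = X 2`. -/
abbrev R3 : Type := MvPolynomial (Fin 3) ℚ

noncomputable def tv : R3 := X 0
noncomputable def yv : R3 := X 1
noncomputable def xv : R3 := X 2

/-- The matrix `B2(t, y)` from the ternary menage problem. -/
noncomputable def B2 : Matrix (Fin 6) (Fin 6) R3 :=
  !![-yv, yv * tv, tv, 0, yv * tv, -yv;
     -yv, yv * (tv - 1), 0, yv ^ 2 * (tv - 1), yv * tv, -yv;
     0, yv * (tv - 1), 0, yv ^ 2 * (tv - 1), 0, -yv;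
     -yv, 0, tv - 1, 0, yv * (tv - 1), 0;
     -yv, yv * tv, tv - 1, 0, yv * (tv - 1), -yv;
     -yv, yv * tv, 0, yv ^ 2 * tv, yv * tv, -yv]

/-- The polynomial `c(p, t)`. -/
noncomputable def cPoly (p t : R3) : R3 :=
  p ^ 6 * t ^ 2 - 2 * p ^ 5 * t ^ 3 + p ^ 4 * t ^ 4 + 4 * p ^ 5 * t ^ 2 - 4 * p ^ 4 * t ^ 3 -
    2 * p ^ 5 * t + 6 * p ^ 4 * t ^ 2 - 4 * p ^ 4 * t + 2 * p ^ 3 * t - p ^ 2 * t ^ 2 +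
    4 * p ^ 2 - 2 * p * t + 4 * p + 1

/-- The polynomial `d(p, t) = -p^2 t (2 + p - t)^2`. -/
noncomputable def dPoly (p t : R3) : R3 := -(p ^ 2) * t * (2 + p - t) ^ 2

set_option maxHeartbeats 4000000 in
/-- The determinant identity over an arbitrary commutative ring. -/
theorem det_aux {R : Type*} [CommRing R] (t y x : R) :
    Matrix.det !![1 + x * y, -(x * (y * t)), -(x * t), 0, -(x * (y * t)), x * y;
     x * y, 1 - x * (y * (t - 1)), 0, -(x * (y ^ 2 * (t - 1))), -(x * (y * t)), x * y;
     0, -(x * (y * (t - 1))), 1, -(x * (y ^ 2 * (t - 1))), 0, x * y;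
     x * y, 0, -(x * (t - 1)), 1, -(x * (y * (t - 1))), 0;
     x * y, -(x * (y * t)), -(x * (t - 1)), 0, 1 - x * (y * (t - 1)), x * y;
     x * y, -(x * (y * t)), 0, -(x * (y ^ 2 * t)), -(x * (y * t)), 1 + x * y] =
    (x * y) ^ 6 * t ^ 2 - 2 * (x * y) ^ 5 * t ^ 3 + (x * y) ^ 4 * t ^ 4 + 4 * (x * y) ^ 5 * t ^ 2
      - 4 * (x * y) ^ 4 * t ^ 3 - 2 * (x * y) ^ 5 * t + 6 * (x * y) ^ 4 * t ^ 2
      - 4 * (x * y) ^ 4 * t + 2 * (x * y) ^ 3 * t - (x * y) ^ 2 * t ^ 2 +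
      4 * (x * y) ^ 2 - 2 * (x * y) * t + 4 * (x * y) + 1
      + (-((x * y) ^ 2) * t * (2 + x * y - t) ^ 2) * (x + x * y ^ 2) := by
  simp [Matrix.det_succ_row_zero, Fin.sum_univ_succ, Fin.succAbove, Matrix.submatrix]
  ring

/-- `det(I - x * B2) = c(xy, t) + d(xy, t) * (x + x y^2)` in `ℚ[t, y, x]`. -/
theorem det_one_sub_smul_B2 :
    Matrix.det (1 - xv • B2) =
      cPoly (xv * yv) tv + dPoly (xv * yv) tv * (xv + xv * yv ^ 2) := by
  have h : (1 - xv • B2) = !![1 + xv * yv, -(xv * (yv * tv)), -(xv * tv), 0, -(xv * (yv * tv)), xv * yv;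
     xv * yv, 1 - xv * (yv * (tv - 1)), 0, -(xv * (yv ^ 2 * (tv - 1))), -(xv * (yv * tv)), xv * yv;
     0, -(xv * (yv * (tv - 1))), 1, -(xv * (yv ^ 2 * (tv - 1))), 0, xv * yv;
     xv * yv, 0, -(xv * (tv - 1)), 1, -(xv * (yv * (tv - 1))), 0;
     xv * yv, -(xv * (yv * tv)), -(xv * (tv - 1)), 0, 1 - xv * (yv * (tv - 1)), xv * yv;
     xv * yv, -(xv * (yv * tv)), 0, -(xv * (yv ^ 2 * tv)), -(xv * (yv * tv)), 1 + xv * yv] := by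
    ext1 i j
    fin_cases i <;> fin_cases j <;> simp [B2]
  rw [h, det_aux]
  rfl
end
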